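/- Let h, l > 0 and let T = {(x,y) ∈ ℝ² : x ≥ 0, y ≥ 0, x/h + y/l ≤ 1} be the right triangle with base [0,h] × {0} and height l. For every function v : ℝ² → ℝ that is continuously differentiable on a neighborhood of T, the weighted trace on the base satisfies ∫₀ʰ v(x,0)²·(1 − x/h) dx ≤ (1/l)·‖v‖²_{L²(T)} + 2·‖v‖_{L²(T)}·‖∂_y v‖_{L²(T)}, where ∂_y v denotes the partial derivative of v in the second coordinate. -/

import Mathlib

open MeasureTheory

theorem aux_slice (h l : ℝ) (hl : 0 < l) (v : ℝ × ℝ → ℝ) (U : Set (ℝ × ℝ)) (hU : IsOpen U)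
    (hv : ContDiffOn ℝ 1 v U) (x L : ℝ) (hL : L = l * (1 - x / h)) (hL0 : 0 ≤ L)
    (hsub : ∀ y ∈ Set.Icc 0 L, (x, y) ∈ U) :
    ∫ y in Set.Icc 0 L, ((1 / l) * (v (x, y)) ^ 2
      - 2 * (v (x, y) * fderiv ℝ v (x, y) (0, 1)) * (1 - x / h - y / l))
      = (v (x, 0)) ^ 2 * (1 - x / h) := by
  have hc : ContinuousOn (fun p => fderiv ℝ v p (0, 1)) U :=
    (hv.continuousOn_fderiv_of_isOpen hU le_rfl).clm_apply continuousOn_const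
  have hm : Set.MapsTo (fun y : ℝ => (x, y)) (Set.Icc 0 L) U := hsub
  have hxc : ContinuousOn (fun y : ℝ => (x, y)) (Set.Icc 0 L) := by fun_prop
  have h1 := hv.continuousOn.comp hxc hm
  have h2 := hc.comp hxc hm
  simp only [Function.comp_def] at h1 h2
  rw [integral_Icc_eq_integral_Ioc, ← intervalIntegral.integral_of_le hL0]
  rw [intervalIntegral.integral_eq_sub_of_hasDerivAt
    (f := fun y => - ((v (x, y)) ^ 2 * (1 - x / h - y / l)))]
  · have : 1 - x / h - L / l = 0 := by rw [hL]; field_simp; ring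
    simp [this]
  · intro y hy
    rw [Set.uIcc_of_le hL0] at hy
    have hd : HasFDerivAt v (fderiv ℝ v (x, y)) (x, y) :=
      ((hv.differentiableOn one_ne_zero).differentiableAt (hU.mem_nhds (hsub y hy))).hasFDerivAt
    have hp : HasDerivAt (fun y : ℝ => (x, y)) (0, 1) y :=
      (hasDerivAt_const y x).prodMk (hasDerivAt_id y)
    have hcomp : HasDerivAt (fun y : ℝ => v (x, y)) (fderiv ℝ v (x, y) (0, 1)) y :=
      hd.comp_hasDerivAt y hp
    have hw : HasDerivAt (fun y : ℝ => 1 - x / h - y / l) (-(1 / l)) y :=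
      ((hasDerivAt_id y).div_const l).const_sub _
    refine ((hcomp.pow 2).mul hw).neg.congr_deriv ?_
    simp
    ring
  · apply ContinuousOn.intervalIntegrable
    rw [Set.uIcc_of_le hL0]
    have h3 : ContinuousOn (fun y : ℝ => 1 - x / h - y / l) (Set.Icc 0 L) := by fun_prop
    exact ((h1.pow 2).const_mul _ ).sub (((h1.mul h2).const_mul 2).mul h3)

theorem aux_cs (T : Set (ℝ × ℝ)) (hT : IsCompact T) (f g : ℝ × ℝ → ℝ)
    (hf : ContinuousOn f T) (hg : ContinuousOn g T) :
    ∫ p in T, |f p| * |g p| ≤ Real.sqrt (∫ p in T, f p ^ 2) * Real.sqrt (∫ p in T, g p ^ 2) := by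
  have key : ∀ u : ℝ × ℝ → ℝ, ContinuousOn u T →
      MemLp (fun p => |u p|) (ENNReal.ofReal 2) (volume.restrict T) := by
    intro u hu
    have hu' : ContinuousOn (fun p => |u p|) T := hu.abs
    have : ENNReal.ofReal 2 = 2 := by norm_num
    rw [this, memLp_two_iff_integrable_sq
      (hu'.aestronglyMeasurable_of_isCompact hT hT.measurableSet)]
    exact (hu'.pow 2).integrableOn_compact hT
  have := integral_mul_le_Lp_mul_Lq_of_nonneg (μ := volume.restrict T)
    (p := 2) (q := 2) Real.HolderConjugate.two_two
    (Filter.Eventually.of_forall fun p => abs_nonneg (f p))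
    (Filter.Eventually.of_forall fun p => abs_nonneg (g p)) (key f hf) (key g hg)
  simpa [Real.sqrt_eq_rpow] using this

/-- Weighted trace inequality on the base of the right triangle
`T = {(x,y) : x ≥ 0, y ≥ 0, x/h + y/l ≤ 1}`:
`∫₀ʰ v(x,0)²(1 − x/h) dx ≤ (1/l)‖v‖²_{L²(T)} + 2‖v‖_{L²(T)}‖∂_y v‖_{L²(T)}`. -/
theorem stmt_2 (h l : ℝ) (hh : 0 < h) (hl : 0 < l)
    (v : ℝ × ℝ → ℝ)
    (hv : ∃ U : Set (ℝ × ℝ), IsOpen U ∧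
      {p : ℝ × ℝ | 0 ≤ p.1 ∧ 0 ≤ p.2 ∧ p.1 / h + p.2 / l ≤ 1} ⊆ U ∧
      ContDiffOn ℝ 1 v U) :
    (∫ x in Set.Icc 0 h, (v (x, 0)) ^ 2 * (1 - x / h)) ≤
      (1 / l) * (∫ p in {p : ℝ × ℝ | 0 ≤ p.1 ∧ 0 ≤ p.2 ∧ p.1 / h + p.2 / l ≤ 1}, (v p) ^ 2) +
        2 * Real.sqrt (∫ p in {p : ℝ × ℝ | 0 ≤ p.1 ∧ 0 ≤ p.2 ∧ p.1 / h + p.2 / l ≤ 1}, (v p) ^ 2) *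
          Real.sqrt (∫ p in {p : ℝ × ℝ | 0 ≤ p.1 ∧ 0 ≤ p.2 ∧ p.1 / h + p.2 / l ≤ 1},
            (fderiv ℝ v p (0, 1)) ^ 2) := by
  obtain ⟨U, hU, hTU, hv⟩ := hv
  set T : Set (ℝ × ℝ) := {p : ℝ × ℝ | 0 ≤ p.1 ∧ 0 ≤ p.2 ∧ p.1 / h + p.2 / l ≤ 1} with hTdef
  have hmem : ∀ x y : ℝ, (x, y) ∈ T ↔ x ∈ Set.Icc 0 h ∧ y ∈ Set.Icc 0 (l * (1 - x / h)) := by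
    intro x y
    have e : x / h + y / l ≤ 1 ↔ y ≤ l * (1 - x / h) := by
      rw [← le_sub_iff_add_le', div_le_iff₀ hl, mul_comm]
    simp only [hTdef, Set.mem_setOf_eq, Set.mem_Icc, e]
    constructor
    · rintro ⟨a, b, c⟩
      refine ⟨⟨a, ?_⟩, b, c⟩
      have : 0 ≤ 1 - x / h := by
        by_contra hn
        push Not at hn
        nlinarith
      rw [← div_le_one hh]; linarith
    · rintro ⟨⟨a, _⟩, b, c⟩
      exact ⟨a, b, c⟩
  have hclosed : IsClosed T := by
    have e1 : IsClosed {p : ℝ × ℝ | 0 ≤ p.1} := isClosed_le (by fun_prop) (by fun_prop)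
    have e2 : IsClosed {p : ℝ × ℝ | 0 ≤ p.2} := isClosed_le (by fun_prop) (by fun_prop)
    have e3 : IsClosed {p : ℝ × ℝ | p.1 / h + p.2 / l ≤ 1} :=
      isClosed_le (by fun_prop) (by fun_prop)
    exact e1.inter (e2.inter e3)
  have hT : IsCompact T := by
    refine (isCompact_Icc.prod isCompact_Icc : IsCompact (Set.Icc 0 h ×ˢ Set.Icc 0 l)).of_isClosed_subset
      hclosed ?_
    rintro ⟨x, y⟩ hp
    obtain ⟨a, b, c⟩ := (hmem x y).1 hp
    refine ⟨a, b, c.trans ?_⟩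
    have : 0 ≤ x / h := div_nonneg a.1 hh.le
    nlinarith
  have hvT : ContinuousOn v T := hv.continuousOn.mono hTU
  have hgT : ContinuousOn (fun p => fderiv ℝ v p (0, 1)) T :=
    ((hv.continuousOn_fderiv_of_isOpen hU le_rfl).clm_apply continuousOn_const).mono hTU
  set G : ℝ × ℝ → ℝ := fun p => (1 / l) * (v p) ^ 2
      - 2 * (v p * fderiv ℝ v p (0, 1)) * (1 - p.1 / h - p.2 / l) with hG
  have hGc : ContinuousOn G T := by
    have : ContinuousOn (fun p : ℝ × ℝ => 1 - p.1 / h - p.2 / l) T := by fun_prop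
    exact ((hvT.pow 2).const_mul _ ).sub (((hvT.mul hgT).const_mul 2).mul this)
  have hGi : IntegrableOn G T := hGc.integrableOn_compact hT
  have heq : (∫ x in Set.Icc 0 h, (v (x, 0)) ^ 2 * (1 - x / h)) = ∫ p in T, G p := by
    rw [← integral_indicator hT.measurableSet, ← integral_indicator measurableSet_Icc]
    rw [Measure.volume_eq_prod, integral_prod]
    · congr 1
      ext x
      by_cases hx : x ∈ Set.Icc 0 h
      · rw [Set.indicator_of_mem hx]
        have hL0 : 0 ≤ l * (1 - x / h) := by
          have : x / h ≤ 1 := (div_le_one hh).2 hx.2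
          exact mul_nonneg hl.le (by linarith)
        rw [← aux_slice h l hl v U hU hv x _ rfl hL0
          (fun y hy => hTU ((hmem x y).2 ⟨hx, hy⟩)), ← integral_indicator measurableSet_Icc]
        congr 1
        ext y
        by_cases hy : y ∈ Set.Icc 0 (l * (1 - x / h))
        · rw [Set.indicator_of_mem hy, Set.indicator_of_mem ((hmem x y).2 ⟨hx, hy⟩)]
        · rw [Set.indicator_of_notMem hy,
            Set.indicator_of_notMem (fun hp => hy ((hmem x y).1 hp).2)]
      · rw [Set.indicator_of_notMem hx]
        have : ∀ y, T.indicator G (x, y) = 0 := fun y =>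
          Set.indicator_of_notMem (fun hp => hx ((hmem x y).1 hp).1) _
        simp [this]
    · rw [← Measure.volume_eq_prod]
      exact hGi.integrable_indicator hT.measurableSet
  have i1 : IntegrableOn (fun p => (1 / l) * (v p) ^ 2) T :=
    ((hvT.pow 2).const_mul _).integrableOn_compact hT
  have i2 : IntegrableOn (fun p => 2 * (|v p| * |fderiv ℝ v p (0, 1)|)) T :=
    ((hvT.abs.mul hgT.abs).const_mul _).integrableOn_compact hT
  have hle : ∫ p in T, G p ≤
      ∫ p in T, ((1 / l) * (v p) ^ 2 + 2 * (|v p| * |fderiv ℝ v p (0, 1)|)) := by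
    refine setIntegral_mono_on hGi (i1.add i2) hT.measurableSet ?_
    intro p hp
    obtain ⟨a, b, c⟩ := hp
    have a' : 0 ≤ p.1 / h := div_nonneg a hh.le
    have b' : 0 ≤ p.2 / l := div_nonneg b hl.le
    have hw0 : 0 ≤ 1 - p.1 / h - p.2 / l := by linarith
    have hw1 : 1 - p.1 / h - p.2 / l ≤ 1 := by linarith
    have k1 := neg_abs_le (v p * fderiv ℝ v p (0, 1))
    have k2 := abs_nonneg (v p * fderiv ℝ v p (0, 1))
    rw [← abs_mul]
    simp only [hG]
    nlinarith [mul_le_mul_of_nonneg_right k1 hw0, mul_le_mul_of_nonneg_left hw1 k2]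
  have hcs := aux_cs T hT v _ hvT hgT
  rw [integral_add i1 i2, integral_const_mul, integral_const_mul] at hle
  rw [heq]
  linarith
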